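/- For every n-qudit state ρ, the set Γ = {(p⃗,q⃗) ∈ V^n : |Ξ_ρ(p⃗,q⃗)| = 1} is a subgroup of V^n of order d^r for some 0 ≤ r ≤ n, the Weyl operators {w(p⃗,q⃗) : (p⃗,q⃗) ∈ Γ} mutually commute, and the mean state M(ρ) is a minimal stabilizer-projection state; in particular M(ρ) is positive semidefinite with trace 1. -/

import Mathlib

open scoped BigOperators ComplexOrder Classical ENNReal
open Matrix

namespace PaperQI

/-- The computational-basis index set `ℤ_d^n` for an `n`-qudit system. -/
abbrev QV (d n : ℕ) := Fin n → ZMod d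

/-- Matrices (linear operators) on the `n`-qudit Hilbert space `(ℂ^d)^{⊗ n}`,
written in the computational basis indexed by `ℤ_d^n`. -/
abbrev Mat (d n : ℕ) := Matrix (QV d n) (QV d n) ℂ

/-- The character `ξ^z = exp(2πi z/d)` for `z ∈ ℤ_d`. -/
noncomputable def ch (d : ℕ) (z : ZMod d) : ℂ :=
  Complex.exp (2 * Real.pi * Complex.I * (z.val : ℂ) / (d : ℂ))

/-- Dot product on `ℤ_d^n`. -/
def qdot {d n : ℕ} (p k : QV d n) : ZMod d := ∑ i, p i * k i

/-- The `n`-qudit Weyl operator `w(p,q) = ⊗_i ξ^{-2⁻¹ p_i q_i} Z^{p_i} X^{q_i}`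
(for odd prime `d`).  Its matrix entries are
`w(p,q)[k+q, k] = ξ^{p·k + 2⁻¹ p·q}`. -/
noncomputable def weyl (d n : ℕ) [Fact (Nat.Prime d)] (p q : QV d n) : Mat d n :=
  Matrix.of fun k' k =>
    if k' = k + q then ch d (qdot p k + (2 : ZMod d)⁻¹ * qdot p q) else 0

/-- `ρ` is an `n`-qudit state: positive semidefinite with trace one. -/
def IsState (d n : ℕ) [Fact (Nat.Prime d)] (ρ : Mat d n) : Prop :=
  ρ.PosSemidef ∧ ρ.trace = 1

/-- The characteristic function `Ξ_ρ(p,q) = Tr[ρ w(-p,-q)]`. -/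
noncomputable def xi (d n : ℕ) [Fact (Nat.Prime d)] (ρ : Mat d n)
    (pq : QV d n × QV d n) : ℂ :=
  (ρ * weyl d n (-pq.1) (-pq.2)).trace

/-- The mean state `M(ρ) = d^{-n} ∑_{|Ξ_ρ(p,q)| = 1} Ξ_ρ(p,q) w(p,q)`. -/
noncomputable def meanState (d n : ℕ) [Fact (Nat.Prime d)] (ρ : Mat d n) : Mat d n :=
  ((d : ℂ) ^ n)⁻¹ •
    ∑ pq : QV d n × QV d n,
      if ‖xi d n ρ pq‖ = 1 then xi d n ρ pq • weyl d n pq.1 pq.2 else 0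

/-- `ρ` is a minimal stabilizer-projection state (MSPS): for some `r ≤ n` there are
mutually commuting Weyl operators `w(p_i,q_i)`, `i = 1,…,r`, whose labels generate a
subgroup of `V^n` of order `d^r`, and phases `x ∈ ℤ_d^r`, such that
`ρ = d^{-(n-r)} ∏_i ( (1/d) ∑_{k ∈ ℤ_d} (ξ^{x_i} w(p_i,q_i))^k )`. -/
noncomputable def IsMSPS (d n : ℕ) [Fact (Nat.Prime d)] (ρ : Mat d n) : Prop :=
  ∃ r : ℕ, r ≤ n ∧
    ∃ (p q : Fin r → QV d n) (x : Fin r → ZMod d),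
      (∀ i j, Commute (weyl d n (p i) (q i)) (weyl d n (p j) (q j))) ∧
      Nat.card (AddSubgroup.closure (Set.range fun i => (p i, q i)) :
        AddSubgroup (QV d n × QV d n)) = d ^ r ∧
      ρ = ((d : ℂ) ^ (n - r))⁻¹ •
        (List.ofFn fun i =>
          (d : ℂ)⁻¹ • ∑ k : ZMod d, (ch d (x i) • weyl d n (p i) (q i)) ^ k.val).prod

/-- The magic gap `MG(ρ) = 1 - max{|Ξ_ρ(p,q)| : Ξ_ρ(p,q) ≠ 0, |Ξ_ρ(p,q)| ≠ 1}`,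
and `MG(ρ) = 0` if this set is empty. -/
noncomputable def magicGap (d n : ℕ) [Fact (Nat.Prime d)] (ρ : Mat d n) : ℝ :=
  let s : Finset ℝ :=
    (Finset.univ.filter fun pq : QV d n × QV d n =>
      xi d n ρ pq ≠ 0 ∧ ‖xi d n ρ pq‖ ≠ 1).image
      fun pq => ‖xi d n ρ pq‖
  if h : s.Nonempty then 1 - s.max' h else 0

/-- Von Neumann entropy `H(ρ) = -∑ λ_i log λ_i` (natural log, eigenvalues of `ρ`),
with the convention `0 log 0 = 0`; junk value `0` on non-Hermitian matrices. -/
noncomputable def vnEnt {d n : ℕ} [Fact (Nat.Prime d)] (ρ : Mat d n) : ℝ :=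
  if h : ρ.IsHermitian then -∑ i, h.eigenvalues i * Real.log (h.eigenvalues i) else 0

/-- Rényi entropy `H_α` for `α ∈ [0,∞]`:  `H_0 = log rank`, `H_1 = H` (von Neumann),
`H_∞ = -log λ_max`, and `H_α = (1-α)⁻¹ log ∑ λ_i^α` otherwise. -/
noncomputable def renyiEnt {d n : ℕ} [Fact (Nat.Prime d)] (α : ℝ≥0∞) (ρ : Mat d n) : ℝ :=
  if h : ρ.IsHermitian then
    if α = 0 then Real.log (ρ.rank : ℝ)
    else if α = 1 then -∑ i, h.eigenvalues i * Real.log (h.eigenvalues i)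
    else if α = ⊤ then -Real.log (⨆ i, h.eigenvalues i)
    else (1 - α.toReal)⁻¹ * Real.log (∑ i, h.eigenvalues i ^ α.toReal)
  else 0

/-- Matrix logarithm on the support: `log ρ = U diag(log λ_i) U†` via the spectral
decomposition, with `log 0 = 0` on the kernel; junk value `0` off Hermitian matrices. -/
noncomputable def matLog {d n : ℕ} [Fact (Nat.Prime d)] (ρ : Mat d n) : Mat d n :=
  if h : ρ.IsHermitian then
    (h.eigenvectorUnitary : Mat d n) *
      Matrix.diagonal (fun i => (Real.log (h.eigenvalues i) : ℂ)) *
      star (h.eigenvectorUnitary : Mat d n)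
  else 0

/-- Matrix real power on the support: `ρ^t = U diag(λ_i^t) U†`, with `0^t = 0` on the
kernel (for `t ≠ 0`); junk value `0` off Hermitian matrices. -/
noncomputable def matRpow {d n : ℕ} [Fact (Nat.Prime d)] (ρ : Mat d n) (t : ℝ) : Mat d n :=
  if h : ρ.IsHermitian then
    (h.eigenvectorUnitary : Mat d n) *
      Matrix.diagonal (fun i => ((h.eigenvalues i ^ t : ℝ) : ℂ)) *
      star (h.eigenvectorUnitary : Mat d n)
  else 0

/-- Support inclusion `supp ρ ⊆ supp σ`, expressed as `ker σ ⊆ ker ρ`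
(the correct notion for positive semidefinite matrices). -/
def suppLE {d n : ℕ} [Fact (Nat.Prime d)] (ρ σ : Mat d n) : Prop :=
  ∀ v : QV d n → ℂ, σ.mulVec v = 0 → ρ.mulVec v = 0

/-- Relative entropy `D(ρ‖σ) = Tr[ρ(log ρ - log σ)]` when `supp ρ ⊆ supp σ`, else `+∞`. -/
noncomputable def relEnt {d n : ℕ} [Fact (Nat.Prime d)] (ρ σ : Mat d n) : EReal :=
  if suppLE ρ σ then (((ρ * (matLog ρ - matLog σ)).trace.re : ℝ) : EReal) else ⊤

/-- Sandwiched Rényi relative entropy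
`D_α(ρ‖σ) = (α-1)⁻¹ log Tr[(σ^{(1-α)/(2α)} ρ σ^{(1-α)/(2α)})^α]` for `α ≠ 1`
(with `+∞` when `supp ρ ⊄ supp σ`), and `D_1 = D` the relative entropy. -/
noncomputable def sandRenyi {d n : ℕ} [Fact (Nat.Prime d)] (α : ℝ) (ρ σ : Mat d n) :
    EReal :=
  if α = 1 then relEnt ρ σ
  else if suppLE ρ σ then
    let x : ℝ := (α - 1)⁻¹ * Real.log
      ((matRpow (matRpow σ ((1 - α) / (2 * α)) * ρ * matRpow σ ((1 - α) / (2 * α)))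
        α).trace.re)
    (x : EReal)
  else ⊤

/-- The key unitary `U|i,j⟩ = |N g₁₁ i - N g₁₀ j, -N g₀₁ i + N g₀₀ j⟩`,
where `N = (det G)⁻¹` in `ℤ_d`. -/
noncomputable def convU (d n : ℕ) [Fact (Nat.Prime d)] (g00 g01 g10 g11 : ZMod d) :
    Matrix (QV d n × QV d n) (QV d n × QV d n) ℂ :=
  Matrix.of fun kl ij =>
    if kl = ((fun a => (g00 * g11 - g01 * g10)⁻¹ * g11 * ij.1 a
                      - (g00 * g11 - g01 * g10)⁻¹ * g10 * ij.2 a : QV d n),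
             (fun a => -((g00 * g11 - g01 * g10)⁻¹ * g01) * ij.1 a
                      + (g00 * g11 - g01 * g10)⁻¹ * g00 * ij.2 a : QV d n))
    then 1 else 0

/-- Tensor (Kronecker) product of two `n`-qudit operators, on the doubled system. -/
def kron {d n : ℕ} (ρ σ : Mat d n) : Matrix (QV d n × QV d n) (QV d n × QV d n) ℂ :=
  Matrix.of fun ij kl => ρ ij.1 kl.1 * σ ij.2 kl.2

/-- Partial trace over the second `n`-qudit factor. -/
noncomputable def ptrB {d n : ℕ} [Fact (Nat.Prime d)]
    (M : Matrix (QV d n × QV d n) (QV d n × QV d n) ℂ) : Mat d n :=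
  Matrix.of fun i i' => ∑ j : QV d n, M (i, j) (i', j)

/-- The convolution `ρ ⊠ σ = Tr_B[U (ρ ⊗ σ) U†]` with parameter matrix
`G = [g₀₀, g₀₁; g₁₀, g₁₁]`. -/
noncomputable def conv (d n : ℕ) [Fact (Nat.Prime d)] (g00 g01 g10 g11 : ZMod d)
    (ρ σ : Mat d n) : Mat d n :=
  ptrB (convU d n g00 g01 g10 g11 * kron ρ σ * (convU d n g00 g01 g10 g11)ᴴ)

/-- The beam-splitter unitary `U_{s,t}|i,j⟩ = |s i + t j, t i - s j⟩`. -/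
noncomputable def bsU (d n : ℕ) [Fact (Nat.Prime d)] (s t : ZMod d) :
    Matrix (QV d n × QV d n) (QV d n × QV d n) ℂ :=
  Matrix.of fun kl ij =>
    if kl = ((fun a => s * ij.1 a + t * ij.2 a : QV d n),
             (fun a => t * ij.1 a - s * ij.2 a : QV d n))
    then 1 else 0

/-- The beam-splitter convolution `ρ ⊠_{s,t} σ = Tr_B[U_{s,t} (ρ ⊗ σ) U_{s,t}†]`. -/
noncomputable def bsConv (d n : ℕ) [Fact (Nat.Prime d)] (s t : ZMod d)
    (ρ σ : Mat d n) : Mat d n :=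
  ptrB (bsU d n s t * kron ρ σ * (bsU d n s t)ᴴ)

/-- Iterated self-convolution: `⊠^0 ρ = ρ` and `⊠^{N+1} ρ = (⊠^N ρ) ⊠ ρ`. -/
noncomputable def bsIter (d n : ℕ) [Fact (Nat.Prime d)] (s t : ZMod d) :
    ℕ → Mat d n → Mat d n
  | 0, ρ => ρ
  | N + 1, ρ => bsConv d n s t (bsIter d n s t N ρ) ρ

/-- `ρ` is the pure stabilizer state `|ψ⟩⟨ψ|` with stabilizer label group `S ⊆ V^n`:
`S` has order `d^n` and `ψ` is a common eigenvector of all `w(p,q)`, `(p,q) ∈ S`. -/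
noncomputable def IsPureStabilizerWithGroup (d n : ℕ) [Fact (Nat.Prime d)]
    (ρ : Mat d n) (S : AddSubgroup (QV d n × QV d n)) : Prop :=
  Nat.card S = d ^ n ∧
    ∃ ψ : QV d n → ℂ, ψ ≠ 0 ∧
      ρ = Matrix.of (fun a b => ψ a * starRingEnd ℂ (ψ b)) ∧
      ∀ pq ∈ S, ∃ c : ℂ, (weyl d n pq.1 pq.2).mulVec ψ = c • ψ

/-- `ρ` is a pure stabilizer state. -/
noncomputable def IsPureStabilizer (d n : ℕ) [Fact (Nat.Prime d)] (ρ : Mat d n) : Prop :=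
  ∃ S : AddSubgroup (QV d n × QV d n), IsPureStabilizerWithGroup d n ρ S

/-- `ρ` is a stabilizer state: a convex combination of pure stabilizer states. -/
noncomputable def IsStabilizerState (d n : ℕ) [Fact (Nat.Prime d)] (ρ : Mat d n) : Prop :=
  ∃ (m : ℕ) (p : Fin m → ℝ) (τ : Fin m → Mat d n),
    (∀ i, 0 ≤ p i) ∧ ∑ i, p i = 1 ∧ (∀ i, IsPureStabilizer d n (τ i)) ∧
    ρ = ∑ i, (p i : ℂ) • τ i

/-- `U` is a Clifford unitary: a unitary mapping each Weyl operator, under conjugation,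
to a complex phase times a Weyl operator. -/
noncomputable def IsClifford (d n : ℕ) [Fact (Nat.Prime d)] (U : Mat d n) : Prop :=
  U ∈ Matrix.unitaryGroup (QV d n) ℂ ∧
    ∀ pq : QV d n × QV d n, ∃ (c : ℂ) (pq' : QV d n × QV d n),
      ‖c‖ = 1 ∧ U * weyl d n pq.1 pq.2 * Uᴴ = c • weyl d n pq'.1 pq'.2

/-- The divergence-based quantum Fisher information `J(ρ; H) = Tr[ρ [H,[H, log ρ]]]`. -/
noncomputable def fisherJ {d n : ℕ} [Fact (Nat.Prime d)] (ρ H : Mat d n) : ℝ :=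
  (ρ * (H * (H * matLog ρ - matLog ρ * H) - (H * matLog ρ - matLog ρ * H) * H)).trace.re

/-- Embed a single-qudit operator at site `k` of an `n`-qudit system
(tensored with the identity elsewhere). -/
noncomputable def embedAt (d n : ℕ) (k : Fin n) (M : Matrix (ZMod d) (ZMod d) ℂ) :
    Mat d n :=
  Matrix.of fun v w => if ∀ i, i ≠ k → v i = w i then M (v k) (w k) else 0

/-- The rank-one projection `H_j^Z = |j⟩⟨j|` onto the eigenvector of `Z`
with eigenvalue `ξ^j`. -/
noncomputable def projZ (d : ℕ) (j : ZMod d) : Matrix (ZMod d) (ZMod d) ℂ :=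
  Matrix.of fun a b => if a = j ∧ b = j then 1 else 0

/-- The rank-one projection `H_j^X` onto the eigenvector of `X` with eigenvalue `ξ^j`;
its entries are `(H_j^X)_{a b} = d⁻¹ ξ^{j(b-a)}`. -/
noncomputable def projX (d : ℕ) (j : ZMod d) : Matrix (ZMod d) (ZMod d) ℂ :=
  Matrix.of fun a b => (d : ℂ)⁻¹ * ch d (j * (b - a))

/-- Total Fisher information
`J(ρ) = ∑_{k=1}^n ∑_{j ∈ ℤ_d} J(ρ; H_j^{X_k}) + J(ρ; H_j^{Z_k})`. -/
noncomputable def fisherTotal (d n : ℕ) [Fact (Nat.Prime d)] (ρ : Mat d n) : ℝ :=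
  ∑ k : Fin n, ∑ j : ZMod d,
    (fisherJ ρ (embedAt d n k (projX d j)) + fisherJ ρ (embedAt d n k (projZ d j)))

/-- Holevo capacity of a channel `E`:
`χ(E) = sup H(∑ p_i E(ρ_i)) - ∑ p_i H(E(ρ_i))` over finite ensembles of states. -/
noncomputable def holevoCap (d n : ℕ) [Fact (Nat.Prime d)] (E : Mat d n → Mat d n) : ℝ :=
  ⨆ m : ℕ, ⨆ p : Fin m → ℝ, ⨆ ρs : Fin m → Mat d n,
    ⨆ _ : (∀ i, 0 ≤ p i) ∧ ∑ i, p i = 1 ∧ ∀ i, IsState d n (ρs i),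
      (vnEnt (∑ i, (p i : ℂ) • E (ρs i)) - ∑ i, p i * vnEnt (E (ρs i)))

/-- Hilbert–Schmidt norm `‖A‖₂ = (Tr[A†A])^{1/2}`. -/
noncomputable def hsNorm {d n : ℕ} [Fact (Nat.Prime d)] (A : Mat d n) : ℝ :=
  Real.sqrt ((Aᴴ * A).trace.re)

/-- Trace norm `‖A‖₁ = Tr[(A†A)^{1/2}]`. -/
noncomputable def trNorm {d n : ℕ} [Fact (Nat.Prime d)] (A : Mat d n) : ℝ :=
  (matRpow (Aᴴ * A) (2⁻¹ : ℝ)).trace.re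

/-- Tensor product of an `n₁`-qudit operator with an `n₂`-qudit operator,
as an `(n₁+n₂)`-qudit operator. -/
def tensorMat (d n₁ n₂ : ℕ) (ρ₁ : Mat d n₁) (ρ₂ : Mat d n₂) : Mat d (n₁ + n₂) :=
  Matrix.of fun v w =>
    ρ₁ (fun i => v (Fin.castAdd n₂ i)) (fun i => w (Fin.castAdd n₂ i)) *
    ρ₂ (fun j => v (Fin.natAdd n₁ j)) (fun j => w (Fin.natAdd n₁ j))

/-! ### Qubit (`d = 2`) specific definitions -/

/-- The `n`-qubit Weyl (Pauli) operator `w(p,q) = ⊗_i i^{-p_i q_i} Z^{p_i} X^{q_i}`. -/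
noncomputable def weyl2 (n : ℕ) (p q : Fin n → ZMod 2) :
    Matrix (Fin n → ZMod 2) (Fin n → ZMod 2) ℂ :=
  Matrix.of fun k' k =>
    if k' = k + q then
      ∏ i, ((-Complex.I) ^ ((p i).val * (q i).val) *
        (-1 : ℂ) ^ ((p i * (k i + q i)).val))
    else 0

/-- The `n`-qubit characteristic function `Ξ_ρ(p,q) = Tr[ρ w(p,q)†]`. -/
noncomputable def xi2 (n : ℕ) (ρ : Matrix (Fin n → ZMod 2) (Fin n → ZMod 2) ℂ)
    (pq : (Fin n → ZMod 2) × (Fin n → ZMod 2)) : ℂ :=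
  (ρ * (weyl2 n pq.1 pq.2)ᴴ).trace

/-- The logarithmic magic gap
`LMG(ρ) = -log₂ max{|Ξ_ρ(p,q)| : Ξ_ρ(p,q) ≠ 0, |Ξ_ρ(p,q)| ≠ 1}` (`0` if the set is
empty). -/
noncomputable def lmg (n : ℕ) (ρ : Matrix (Fin n → ZMod 2) (Fin n → ZMod 2) ℂ) : ℝ :=
  let s : Finset ℝ :=
    (Finset.univ.filter fun pq : (Fin n → ZMod 2) × (Fin n → ZMod 2) =>
      xi2 n ρ pq ≠ 0 ∧ ‖xi2 n ρ pq‖ ≠ 1).image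
      fun pq => ‖xi2 n ρ pq‖
  if h : s.Nonempty then -Real.logb 2 (s.max' h) else 0

/-- `U` is an `n`-qubit Clifford unitary. -/
noncomputable def IsClifford2 (n : ℕ) (U : Matrix (Fin n → ZMod 2) (Fin n → ZMod 2) ℂ) :
    Prop :=
  U ∈ Matrix.unitaryGroup (Fin n → ZMod 2) ℂ ∧
    ∀ pq : (Fin n → ZMod 2) × (Fin n → ZMod 2),
      ∃ (c : ℂ) (pq' : (Fin n → ZMod 2) × (Fin n → ZMod 2)),
        ‖c‖ = 1 ∧ U * weyl2 n pq.1 pq.2 * Uᴴ = c • weyl2 n pq'.1 pq'.2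

/-- The T gate `diag(1, e^{iπ/4})` acting on qubit `k` of an `n`-qubit system. -/
noncomputable def tGateAt (n : ℕ) (k : Fin n) :
    Matrix (Fin n → ZMod 2) (Fin n → ZMod 2) ℂ :=
  embedAt 2 n k (Matrix.of fun a b =>
    if a = b then (if a = 0 then 1 else Complex.exp (Real.pi * Complex.I / 4)) else 0)

/-- An `n`-qubit state: positive semidefinite with trace one. -/
def IsState2 (n : ℕ) (ρ : Matrix (Fin n → ZMod 2) (Fin n → ZMod 2) ℂ) : Prop :=
  ρ.PosSemidef ∧ ρ.trace = 1

end PaperQI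

namespace PaperQI

/-!
If `|Ξ_ρ(u)| = 1`, the Cauchy–Schwarz inequality `|Tr[ρ U]| ≤ Tr ρ` is an equality for the unitary
`U = w(-u)`, which forces the eigenvalue equation `ρ w(-u) = Ξ_ρ(u) ρ`. Since
`w(u) w(v) = ξ^{2⁻¹ω(u,v)} w(u + v)` for the symplectic form `ω`, two such equations for `u` and `v`
are compatible only if `ω(u,v) = 0`, and then `Ξ_ρ(u + v) = Ξ_ρ(u) Ξ_ρ(v)`. Hence `Γ` is a totally
isotropic subspace of `V^n`, so of dimension `r ≤ n`, on which `Ξ_ρ` is a character, and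
`u ↦ Ξ_ρ(u) w(u)` is a unitary representation of `Γ`. The sum of its operators is a positive
multiple of an orthogonal projection, and a basis of `Γ` factors it as the product in the
definition of an MSPS.
-/

section Matrices

variable {m 𝕜 : Type*} [Fintype m] [RCLike 𝕜]

theorem mul_eq_zero_of_trace_conjTranspose_mul_mul_eq_zero {ρ A : Matrix m m 𝕜}
    (hρ : ρ.PosSemidef) (h : (Aᴴ * ρ * A).trace = 0) : ρ * A = 0 := by
  have hA : Aᴴ * ρ * A = 0 := (hρ.conjTranspose_mul_mul_same A).trace_eq_zero_iff.1 h
  refine ext_of_mulVec_single fun i => ?_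
  rw [← mulVec_mulVec, zero_mulVec, ← hρ.dotProduct_mulVec_zero_iff, star_mulVec,
    ← dotProduct_mulVec, mulVec_mulVec, mulVec_mulVec, hA, zero_mulVec, dotProduct_zero]

-- The trace of `(U - c)ᴴ ρ (U - c)` is `2 Tr ρ - c⋆ Tr[ρ U] - c Tr[ρ Uᴴ]`, the defect in the
-- Cauchy–Schwarz inequality for `Tr[ρ U]`.
theorem mul_eq_smul_of_trace_mul_eq [DecidableEq m] {ρ U : Matrix m m 𝕜} {c : 𝕜}
    (hρ : ρ.PosSemidef) (hU : U ∈ unitaryGroup m 𝕜) (hc : ‖c‖ = 1)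
    (h : (ρ * U).trace = c * ρ.trace) : ρ * U = c • ρ := by
  have hcc : star c * c = 1 := by simp [RCLike.conj_mul, hc]
  have h_star : (ρ * Uᴴ).trace = star c * ρ.trace := by
    rw [trace_mul_comm, ← hρ.isHermitian.eq, ← conjTranspose_mul, trace_conjTranspose, h, star_mul',
      ← trace_conjTranspose]
  have h_defect : ((U - c • 1)ᴴ * ρ * (U - c • 1)).trace = 0 := by
    have hUU : U * Uᴴ = 1 := mem_unitaryGroup_iff.1 hU
    have h_expand : (U - c • 1) * (U - c • 1)ᴴ = (1 + star c * c) • 1 - star c • U - c • Uᴴ := by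
      simp only [conjTranspose_sub, conjTranspose_smul, conjTranspose_one, sub_mul, mul_sub, hUU,
        smul_mul_assoc, mul_smul_comm, one_mul, mul_one, add_smul, one_smul, smul_sub, smul_smul]
      abel
    rw [mul_assoc, trace_mul_comm, mul_assoc, h_expand]
    simp only [mul_sub, mul_smul_comm, mul_one, trace_sub, trace_smul, smul_eq_mul, h, h_star]
    linear_combination (-ρ.trace) * hcc
  have h_mul := mul_eq_zero_of_trace_conjTranspose_mul_mul_eq_zero hρ h_defect
  rwa [mul_sub, mul_smul_comm, mul_one, sub_eq_zero] at h_mul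

theorem posSemidef_sum_unitaryGroup [DecidableEq m] {G : Type*} [Group G] [Fintype G]
    (T : G →* unitaryGroup m 𝕜) : (∑ g, (T g : Matrix m m 𝕜)).PosSemidef := by
  set P := ∑ g, (T g : Matrix m m 𝕜) with hP
  have h_herm : Pᴴ = P := by
    rw [hP, conjTranspose_sum]
    refine Fintype.sum_equiv (Equiv.inv G) _ _ fun g => ?_
    rw [Equiv.inv_apply, map_inv, UnitaryGroup.inv_val, star_eq_conjTranspose]
  have h_absorb (g : G) : (T g : Matrix m m 𝕜) * P = P := by
    rw [hP, Finset.mul_sum]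
    exact Fintype.sum_equiv (Equiv.mulLeft g) _ _ fun k => by simp
  have h_sq : Pᴴ * P = (Fintype.card G : 𝕜) • P := calc
    Pᴴ * P = ∑ g, (T g : Matrix m m 𝕜) * P := by rw [h_herm, ← Finset.sum_mul]
    _ = ∑ _g : G, P := Finset.sum_congr rfl fun g _ => h_absorb g
    _ = (Fintype.card G : 𝕜) • P := by
      rw [Finset.sum_const, Finset.card_univ, Nat.cast_smul_eq_nsmul]
  have h_card : (Fintype.card G : 𝕜) ≠ 0 := Nat.cast_ne_zero.2 Fintype.card_ne_zero
  rw [← inv_smul_smul₀ h_card P, ← h_sq]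
  exact (posSemidef_conjTranspose_mul_self P).smul (by positivity)

theorem trace_eq_zero_of_mul_eq_smul_mul [DecidableEq m] {R : Type*} [CommRing R]
    [NoZeroDivisors R] {A U : Matrix m m R} {c : R} (hU : IsUnit U) (hc : c ≠ 1)
    (h : U * A = c • (A * U)) : A.trace = 0 := by
  obtain ⟨U, rfl⟩ := hU
  have h_trace : A.trace = c * A.trace := calc
    A.trace = (U * A * ↑U⁻¹ : Matrix m m R).trace := (trace_units_conj U A).symm
    _ = c * A.trace := by
      rw [h, smul_mul_assoc, Units.mul_inv_cancel_right, trace_smul, smul_eq_mul]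
  have h_zero : (1 - c) * A.trace = 0 := by linear_combination h_trace
  exact (mul_eq_zero.1 h_zero).resolve_left (sub_ne_zero.2 hc.symm)

end Matrices

section ZModModules

variable {N : ℕ}

theorem two_mul_inv_two_of_odd (hN : Odd N) : (2 : ZMod N) * 2⁻¹ = 1 :=
  ZMod.coe_mul_inv_eq_one 2 (Nat.coprime_two_left.2 hN)

theorem exists_stdAddChar_eq_of_pow_eq_one [NeZero N] {z : ℂ} (hz : z ^ N = 1) :
    ∃ x : ZMod N, ZMod.stdAddChar x = z := by
  obtain ⟨x, hx⟩ := surjective_rootsOfUnityCircleEquiv_comp_rootsOfUnityAddChar N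
    (rootsOfUnity.mkOfPowEq z hz)
  exact ⟨x, congrArg (fun w : rootsOfUnity N ℂ => ((w : ℂˣ) : ℂ)) hx⟩

theorem sum_eq_prod_sum_pow_basis [NeZero N] {M A : Type*} [AddCommGroup M] [Module (ZMod N) M]
    [Fintype M] [Semiring A] {r : ℕ} (b : Module.Basis (Fin r) (ZMod N) M) (T : AddChar M A) :
    ∑ u, T u = (List.ofFn fun i => ∑ k : ZMod N, T (b i) ^ k.val).prod := by
  have h_distrib := (MultilinearMap.mkPiAlgebraFin ℕ r A).map_sum
    fun i (k : ZMod N) => T (b i) ^ k.val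
  simp only [MultilinearMap.mkPiAlgebraFin_apply] at h_distrib
  rw [h_distrib]
  refine Fintype.sum_equiv b.equivFun.toEquiv _ _ fun u => ?_
  have h_pow (i : Fin r) : T (b i) ^ (b.equivFun u i).val = T (b.equivFun u i • b i) := by
    rw [← AddChar.map_nsmul_eq_pow, ← Nat.cast_smul_eq_nsmul (ZMod N), ZMod.natCast_zmod_val]
  calc T u = T.toMonoidHom (∏ i, .ofAdd (b.equivFun u i • b i)) := by
        rw [← ofAdd_sum, b.sum_equivFun, AddChar.toMonoidHom_apply, toAdd_ofAdd]
    _ = (List.ofFn fun i => T (b i) ^ (b.equivFun u i).val).prod := by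
        simp only [h_pow]
        rw [← List.prod_ofFn, map_list_prod, List.map_ofFn]
        rfl

theorem addSubgroup_closure_eq_span_zmod {M : Type*} [AddCommGroup M] [Module (ZMod N) M]
    (s : Set M) : AddSubgroup.closure s = (Submodule.span (ZMod N) s).toAddSubgroup := by
  refine le_antisymm ((AddSubgroup.closure_le _).2 Submodule.subset_span) ?_
  have h_span : Submodule.span (ZMod N) s ≤ (AddSubgroup.closure s).toZModSubmodule N :=
    Submodule.span_le.2 AddSubgroup.subset_closure
  exact h_span

theorem addSubgroup_closure_range_basis {M ι : Type*} [AddCommGroup M] [Module (ZMod N) M]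
    {S : Submodule (ZMod N) M} (b : Module.Basis ι (ZMod N) S) :
    AddSubgroup.closure (Set.range fun i => (b i : M)) = S.toAddSubgroup := by
  rw [addSubgroup_closure_eq_span_zmod (N := N), ← Function.comp_def, ← Submodule.coe_subtype,
    Set.range_comp, ← Submodule.map_span, b.span_eq, Submodule.map_top, Submodule.range_subtype]

theorem addChar_pow_eq_one {M A : Type*} [AddCommGroup M] [Module (ZMod N) M] [Monoid A]
    (χ : AddChar M A) (u : M) : χ u ^ N = 1 := by
  rw [← AddChar.map_nsmul_eq_pow, ZModModule.char_nsmul_eq_zero, AddChar.map_zero_eq_one]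

theorem natCard_eq_pow_finrank_zmod [Fact N.Prime] (M : Type*) [AddCommGroup M]
    [Module (ZMod N) M] [Module.Finite (ZMod N) M] :
    Nat.card M = N ^ Module.finrank (ZMod N) M := by
  rw [Module.natCard_eq_pow_finrank (K := ZMod N), Nat.card_zmod]

end ZModModules

section SymplecticForm

/-- A submodule on which a bilinear form vanishes identically. -/
def IsTotallyIsotropic {R M : Type*} [CommSemiring R] [AddCommMonoid M] [Module R M]
    (B : LinearMap.BilinForm R M) (S : Submodule R M) : Prop :=
  ∀ u ∈ S, ∀ v ∈ S, B u v = 0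

theorem IsTotallyIsotropic.two_mul_finrank_le {K V : Type*} [Field K] [AddCommGroup V]
    [Module K V] [FiniteDimensional K V] {B : LinearMap.BilinForm K V} (hB : B.Nondegenerate)
    {S : Submodule K V} (hS : IsTotallyIsotropic B S) :
    2 * Module.finrank K S ≤ Module.finrank K V := by
  have h_le : S ≤ B.orthogonal S := fun v hv u hu => hS u hu v hv
  have h_finrank := Submodule.finrank_mono h_le
  rw [LinearMap.BilinForm.finrank_orthogonal hB] at h_finrank
  have := S.finrank_le
  omega

variable {R ι : Type*} [CommRing R] [Fintype ι]

variable (R ι) in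
/-- The standard symplectic form `ω((p,q), (p',q')) = p·q' - q·p'` on the phase space
`R^ι × R^ι`. -/
def symplecticForm : LinearMap.BilinForm R ((ι → R) × (ι → R)) :=
  (dotProductBilin R R).compl₁₂ (.fst R _ _) (.snd R _ _) -
    (dotProductBilin R R).compl₁₂ (.snd R _ _) (.fst R _ _)

theorem symplecticForm_apply (u v : (ι → R) × (ι → R)) :
    symplecticForm R ι u v = u.1 ⬝ᵥ v.2 - u.2 ⬝ᵥ v.1 :=
  rfl

theorem symplecticForm_isAlt : (symplecticForm R ι).IsAlt := fun u => by
  rw [symplecticForm_apply, dotProduct_comm, sub_self]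

theorem symplecticForm_nondegenerate : (symplecticForm R ι).Nondegenerate := by
  refine (LinearMap.IsRefl.nondegenerate_iff_separatingLeft
    (LinearMap.IsAlt.isRefl (B := symplecticForm R ι) symplecticForm_isAlt)).2 fun u hu => ?_
  refine Prod.ext (dotProduct_eq_zero _ fun q => ?_) (dotProduct_eq_zero _ fun p => ?_)
  · simpa [symplecticForm_apply] using hu (0, q)
  · simpa [symplecticForm_apply] using hu (p, 0)

theorem IsTotallyIsotropic.finrank_le_card {K : Type*} [Field K]
    {S : Submodule K ((ι → K) × (ι → K))} (hS : IsTotallyIsotropic (symplecticForm K ι) S) :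
    Module.finrank K S ≤ Fintype.card ι := by
  have := hS.two_mul_finrank_le symplecticForm_nondegenerate
  rw [Module.finrank_prod, Module.finrank_fintype_fun_eq_card] at this
  omega

end SymplecticForm

section Qudits

variable {d n : ℕ} [Fact d.Prime]

local notation "ω" => symplecticForm (ZMod d) (Fin n)

section WeylOperators

/-- The phase space `V^n = ℤ_d^n × ℤ_d^n` of labels of Weyl operators. -/
abbrev PhaseSpace (d n : ℕ) := QV d n × QV d n

/-- The Weyl operator `w(u)` of a phase-space point `u = (p,q)`. -/
noncomputable abbrev weylOp (u : PhaseSpace d n) : Mat d n := weyl d n u.1 u.2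

theorem ch_eq_stdAddChar {N : ℕ} [NeZero N] : ch N = ZMod.stdAddChar := by
  ext z
  rw [ZMod.stdAddChar_apply, ZMod.toCircle_apply, ch]

theorem weylOp_apply (u : PhaseSpace d n) (a b : QV d n) :
    weylOp u a b =
      if a = b + u.2 then ZMod.stdAddChar (u.1 ⬝ᵥ b + 2⁻¹ * (u.1 ⬝ᵥ u.2)) else 0 := by
  rw [← ch_eq_stdAddChar]
  rfl

theorem weylOp_zero : weylOp (0 : PhaseSpace d n) = 1 := by
  ext a b
  simp [weylOp_apply, one_apply]

theorem weylOp_mul (hd : Odd d) (u v : PhaseSpace d n) :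
    weylOp u * weylOp v = ZMod.stdAddChar (2⁻¹ * ω u v) • weylOp (u + v) := by
  ext a b
  rw [mul_apply, Finset.sum_eq_single (b + v.2)
    (fun c _ hc => by rw [weylOp_apply v, if_neg hc, mul_zero])
    (fun h => (h (Finset.mem_univ _)).elim), Matrix.smul_apply, smul_eq_mul]
  simp only [weylOp_apply, if_true, Prod.snd_add, add_assoc, add_comm u.2]
  split_ifs with h
  · rw [← AddChar.map_add_eq_mul, ← AddChar.map_add_eq_mul]
    congr 1
    simp only [symplecticForm_apply, Prod.fst_add, add_dotProduct, dotProduct_add,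
      dotProduct_comm u.2]
    linear_combination (-(u.1 ⬝ᵥ v.2)) * two_mul_inv_two_of_odd hd
  · simp only [zero_mul, mul_zero]

theorem weylOp_conjTranspose (hd : Odd d) (u : PhaseSpace d n) :
    (weylOp u)ᴴ = weylOp (-u) := by
  ext a b
  rw [conjTranspose_apply, weylOp_apply, weylOp_apply, Prod.fst_neg, Prod.snd_neg,
    ← sub_eq_add_neg]
  by_cases h : b = a + u.2
  · subst h
    rw [if_pos rfl, if_pos (add_sub_cancel_right a u.2).symm, ← starRingEnd_apply,
      ← AddChar.map_neg_eq_conj]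
    congr 1
    simp only [neg_dotProduct, dotProduct_neg, dotProduct_add]
    linear_combination (-(u.1 ⬝ᵥ u.2)) * two_mul_inv_two_of_odd hd
  · rw [if_neg h, if_neg fun h' => h (by rw [h', sub_add_cancel]), star_zero]

theorem weylOp_mem_unitaryGroup (hd : Odd d) (u : PhaseSpace d n) :
    weylOp u ∈ unitaryGroup (QV d n) ℂ := by
  rw [mem_unitaryGroup_iff, star_eq_conjTranspose, weylOp_conjTranspose hd, weylOp_mul hd, map_neg,
    symplecticForm_isAlt u, neg_zero, mul_zero, AddChar.map_zero_eq_one, add_neg_cancel,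
    weylOp_zero, one_smul]

theorem weylOp_mul_comm (hd : Odd d) (u v : PhaseSpace d n) :
    weylOp u * weylOp v = ZMod.stdAddChar (ω u v) • (weylOp v * weylOp u) := by
  rw [weylOp_mul hd, weylOp_mul hd, smul_smul, ← AddChar.map_add_eq_mul, add_comm v u]
  congr 2
  rw [← LinearMap.BilinForm.IsAlt.neg_eq symplecticForm_isAlt u v]
  linear_combination ω u v * two_mul_inv_two_of_odd hd

theorem commute_weylOp (hd : Odd d) {u v : PhaseSpace d n} (h : ω u v = 0) :
    Commute (weylOp u) (weylOp v) := by
  rw [Commute, SemiconjBy, weylOp_mul_comm hd, h, AddChar.map_zero_eq_one, one_smul]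

theorem weylOp_add (hd : Odd d) {u v : PhaseSpace d n} (h : ω u v = 0) :
    weylOp (u + v) = weylOp u * weylOp v := by
  rw [weylOp_mul hd, h, mul_zero, AddChar.map_zero_eq_one, one_smul]

theorem trace_weylOp_of_ne_zero (hd : Odd d) {u : PhaseSpace d n} (hu : u ≠ 0) :
    (weylOp u).trace = 0 := by
  obtain ⟨v, hv⟩ : ∃ v, ω v u ≠ 0 := by
    by_contra! h
    exact hu (symplecticForm_nondegenerate.2 u h)
  refine trace_eq_zero_of_mul_eq_smul_mul (IsUnit.of_mul_eq_one _
    (mem_unitaryGroup_iff.1 (weylOp_mem_unitaryGroup hd v))) ?_ (weylOp_mul_comm hd v u)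
  rw [← AddChar.map_zero_eq_one (ZMod.stdAddChar : AddChar (ZMod d) ℂ)]
  exact ZMod.injective_stdAddChar.ne hv

end WeylOperators

section StabilizerStates

variable {S : Submodule (ZMod d) (PhaseSpace d n)}

/-- The operator `d^{-n} ∑_{u ∈ S} χ(u) w(u)` attached to a subspace `S` of phase space and a
character `χ` of `S`. For totally isotropic `S` it is the normalized projection onto the joint
eigenspace `w(u) = χ(u)⁻¹`, `u ∈ S`. -/
noncomputable def stabilizerState (S : Submodule (ZMod d) (PhaseSpace d n)) (χ : AddChar S ℂ) :
    Mat d n :=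
  ((d : ℂ) ^ n)⁻¹ • ∑ u : S, χ u • weylOp (u : PhaseSpace d n)

theorem smul_weylOp_mem_unitaryGroup (hd : Odd d) (χ : AddChar S ℂ) (u : S) :
    χ u • weylOp (u : PhaseSpace d n) ∈ unitaryGroup (QV d n) ℂ := by
  refine Unitary.smul_mem_of_mem ?_ (weylOp_mem_unitaryGroup hd (u : PhaseSpace d n))
  simp [Unitary.mem_iff, Complex.mul_conj', Complex.conj_mul']

/-- The unitary representation `u ↦ χ(u) w(u)` of a totally isotropic subspace. -/
noncomputable def weylRep (hd : Odd d) (hS : IsTotallyIsotropic ω S) (χ : AddChar S ℂ) :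
    AddChar S (unitaryGroup (QV d n) ℂ) where
  toFun u := ⟨χ u • weylOp (u : PhaseSpace d n), smul_weylOp_mem_unitaryGroup hd χ u⟩
  map_zero_eq_one' := Subtype.ext (by simp [weylOp_zero])
  map_add_eq_mul' u v := Subtype.ext <| by
    change χ (u + v) • weylOp (u + v : PhaseSpace d n) =
      (χ u • weylOp (u : PhaseSpace d n)) * (χ v • weylOp (v : PhaseSpace d n))
    rw [weylOp_add hd (hS u u.2 v v.2), AddChar.map_add_eq_mul, smul_mul_smul_comm]

theorem stabilizerState_posSemidef (hd : Odd d) (hS : IsTotallyIsotropic ω S)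
    (χ : AddChar S ℂ) : (stabilizerState S χ).PosSemidef := by
  have h_sum : ∑ u : S, χ u • weylOp (u : PhaseSpace d n) =
      ∑ g, ((weylRep hd hS χ).toMonoidHom g : Mat d n) :=
    Fintype.sum_equiv Multiplicative.ofAdd _ _ fun _ => rfl
  have h_scalar : 0 ≤ ((d : ℂ) ^ n)⁻¹ := by positivity
  rw [stabilizerState, h_sum]
  exact (posSemidef_sum_unitaryGroup _).smul h_scalar

theorem trace_stabilizerState (hd : Odd d) (χ : AddChar S ℂ) :
    (stabilizerState S χ).trace = 1 := by
  have hd0 : (d : ℂ) ^ n ≠ 0 := pow_ne_zero _ (NeZero.ne _)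
  rw [stabilizerState, trace_smul, trace_sum, Finset.sum_eq_single 0]
  · simp [weylOp_zero, hd0]
  · intro u _ hu
    rw [trace_smul, trace_weylOp_of_ne_zero hd (by simpa using hu), smul_zero]
  · exact fun h => (h (Finset.mem_univ _)).elim

theorem stabilizerState_eq_prod (hd : Odd d) (hS : IsTotallyIsotropic ω S) (χ : AddChar S ℂ)
    {r : ℕ} (hr : r ≤ n) (b : Module.Basis (Fin r) (ZMod d) S) :
    stabilizerState S χ = ((d : ℂ) ^ (n - r))⁻¹ •
      (List.ofFn fun i => (d : ℂ)⁻¹ •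
        ∑ k : ZMod d, (χ (b i) • weylOp (b i : PhaseSpace d n)) ^ k.val).prod := by
  have h_sum := sum_eq_prod_sum_pow_basis b
    ((unitaryGroup (QV d n) ℂ).subtype.compAddChar (weylRep hd hS χ))
  have h_scalar : ((d : ℂ) ^ n)⁻¹ = ((d : ℂ) ^ (n - r))⁻¹ * (d : ℂ)⁻¹ ^ r := by
    rw [inv_pow, ← mul_inv, ← pow_add, Nat.sub_add_cancel hr]
  calc stabilizerState S χ
      = ((d : ℂ) ^ n)⁻¹ • (List.ofFn fun i =>
          ∑ k : ZMod d, (χ (b i) • weylOp (b i : PhaseSpace d n)) ^ k.val).prod :=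
        congrArg _ h_sum
    _ = _ := by
        rw [h_scalar, mul_smul]
        congr 1
        simpa [List.map_ofFn, Function.comp_def] using List.smul_prod (List.ofFn fun i =>
          ∑ k : ZMod d, (χ (b i) • weylOp (b i : PhaseSpace d n)) ^ k.val) (d : ℂ)⁻¹

theorem isMSPS_stabilizerState (hd : Odd d) (hS : IsTotallyIsotropic ω S) (χ : AddChar S ℂ) :
    IsMSPS d n (stabilizerState S χ) := by
  have hr : Module.finrank (ZMod d) S ≤ n := by simpa using hS.finrank_le_card
  let b := Module.finBasis (ZMod d) S
  choose x hx using fun i =>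
    exists_stdAddChar_eq_of_pow_eq_one (addChar_pow_eq_one (N := d) χ (b i))
  refine ⟨_, hr, fun i => (b i : PhaseSpace d n).1, fun i => (b i : PhaseSpace d n).2, x,
    fun i j => commute_weylOp hd (hS _ (b i).2 _ (b j).2), ?_, ?_⟩
  · simp only [Prod.mk.eta]
    rw [addSubgroup_closure_range_basis b]
    exact natCard_eq_pow_finrank_zmod S
  · simp only [ch_eq_stdAddChar, hx]
    exact stabilizerState_eq_prod hd hS χ hr b

end StabilizerStates

section MeanState

variable {ρ : Mat d n} {u v : PhaseSpace d n}

theorem xi_zero (hρ : IsState d n ρ) : xi d n ρ 0 = 1 := by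
  change (ρ * weylOp (-0)).trace = 1
  rw [neg_zero, weylOp_zero, mul_one, hρ.2]

theorem xi_neg (hd : Odd d) (hρ : IsState d n ρ) (u : PhaseSpace d n) :
    xi d n ρ (-u) = star (xi d n ρ u) := by
  change (ρ * weylOp (- -u)).trace = star (ρ * weylOp (-u)).trace
  rw [← trace_conjTranspose, conjTranspose_mul, weylOp_conjTranspose hd, hρ.1.isHermitian.eq,
    trace_mul_comm]

theorem mul_weylOp_neg (hd : Odd d) (hρ : IsState d n ρ) (hu : ‖xi d n ρ u‖ = 1) :
    ρ * weylOp (-u) = xi d n ρ u • ρ :=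
  mul_eq_smul_of_trace_mul_eq hρ.1 (weylOp_mem_unitaryGroup hd (-u)) hu
    (by rw [hρ.2, mul_one]; rfl)

theorem mul_weylOp_neg_mul_weylOp_neg (hd : Odd d) (hρ : IsState d n ρ) (hu : ‖xi d n ρ u‖ = 1)
    (hv : ‖xi d n ρ v‖ = 1) :
    ρ * (weylOp (-u) * weylOp (-v)) = (xi d n ρ u * xi d n ρ v) • ρ := by
  rw [← mul_assoc, mul_weylOp_neg hd hρ hu, smul_mul_assoc, mul_weylOp_neg hd hρ hv, smul_smul]

theorem symplecticForm_eq_zero_of_norm_xi_eq_one (hd : Odd d) (hρ : IsState d n ρ)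
    (hu : ‖xi d n ρ u‖ = 1) (hv : ‖xi d n ρ v‖ = 1) : ω u v = 0 := by
  have h_ne : xi d n ρ v * xi d n ρ u ≠ 0 := by
    rw [← norm_ne_zero_iff, norm_mul, hu, hv, one_mul]
    exact one_ne_zero
  have h_comm := congrArg trace (congrArg (ρ * ·) (weylOp_mul_comm hd (-u) (-v)))
  simp only [mul_smul_comm, mul_weylOp_neg_mul_weylOp_neg hd hρ, hu, hv, trace_smul, hρ.2,
    smul_eq_mul, mul_one, map_neg, LinearMap.neg_apply, neg_neg, mul_comm (xi d n ρ u)] at h_comm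
  apply ZMod.injective_stdAddChar
  rw [AddChar.map_zero_eq_one]
  exact (mul_eq_right₀ h_ne).1 h_comm.symm

theorem xi_add (hd : Odd d) (hρ : IsState d n ρ) (hu : ‖xi d n ρ u‖ = 1)
    (hv : ‖xi d n ρ v‖ = 1) : xi d n ρ (u + v) = xi d n ρ u * xi d n ρ v := by
  have h_iso : ω (-u) (-v) = 0 := by
    simpa using symplecticForm_eq_zero_of_norm_xi_eq_one hd hρ hu hv
  change (ρ * weylOp (-(u + v))).trace = _
  rw [neg_add, weylOp_add hd h_iso, mul_weylOp_neg_mul_weylOp_neg hd hρ hu hv, trace_smul, hρ.2,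
    smul_eq_mul, mul_one]

/-- The subspace `Γ` of phase-space points at which the characteristic function of a state has
modulus one. -/
noncomputable def unimodularSubspace (hd : Odd d) (hρ : IsState d n ρ) :
    Submodule (ZMod d) (PhaseSpace d n) :=
  AddSubgroup.toZModSubmodule d
    { carrier := {u | ‖xi d n ρ u‖ = 1}
      zero_mem' := by simp [xi_zero hρ]
      add_mem' := fun {u v} (hu : ‖_‖ = 1) (hv : ‖_‖ = 1) => by
        rw [Set.mem_ofPred_eq, xi_add hd hρ hu hv, norm_mul, hu, hv, one_mul]
      neg_mem' := fun {u} (hu : ‖_‖ = 1) => by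
        rw [Set.mem_ofPred_eq, xi_neg hd hρ, norm_star, hu] }

theorem isTotallyIsotropic_unimodularSubspace (hd : Odd d) (hρ : IsState d n ρ) :
    IsTotallyIsotropic ω (unimodularSubspace hd hρ) :=
  fun _ hu _ hv => symplecticForm_eq_zero_of_norm_xi_eq_one hd hρ hu hv

/-- The restriction of the characteristic function of a state to `Γ`, as a character. -/
noncomputable def xiAddChar (hd : Odd d) (hρ : IsState d n ρ) :
    AddChar (unimodularSubspace hd hρ) ℂ where
  toFun u := xi d n ρ u
  map_zero_eq_one' := xi_zero hρ
  map_add_eq_mul' u v := xi_add hd hρ u.2 v.2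

theorem meanState_eq_stabilizerState (hd : Odd d) (hρ : IsState d n ρ) :
    meanState d n ρ = stabilizerState (unimodularSubspace hd hρ) (xiAddChar hd hρ) := by
  rw [meanState, stabilizerState, ← Finset.sum_filter]
  congr 1
  exact Finset.sum_subtype _ (fun u => by simp [unimodularSubspace])
    fun u => xi d n ρ u • weylOp u

end MeanState

end Qudits

/-- For every `n`-qudit state `ρ`, the set
`Γ = {(p,q) : |Ξ_ρ(p,q)| = 1}` is a subgroup of `V^n` of order `d^r` for some `r ≤ n`,
the Weyl operators with labels in `Γ` mutually commute, and the mean state `M(ρ)` is an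
MSPS; in particular `M(ρ)` is positive semidefinite with trace one. -/
theorem statement0 (d n : ℕ) [Fact (Nat.Prime d)] (hd : Odd d) (hn : 1 ≤ n)
    (ρ : Mat d n) (hρ : IsState d n ρ) :
    (∃ Γ : AddSubgroup (QV d n × QV d n),
        (Γ : Set (QV d n × QV d n)) = {pq | ‖xi d n ρ pq‖ = 1} ∧
        ∃ r : ℕ, r ≤ n ∧ Nat.card Γ = d ^ r) ∧
    (∀ pq pq' : QV d n × QV d n, ‖xi d n ρ pq‖ = 1 →
        ‖xi d n ρ pq'‖ = 1 →
        Commute (weyl d n pq.1 pq.2) (weyl d n pq'.1 pq'.2)) ∧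
    IsMSPS d n (meanState d n ρ) ∧
    (meanState d n ρ).PosSemidef ∧ (meanState d n ρ).trace = 1 := by
  have h_iso := isTotallyIsotropic_unimodularSubspace hd hρ
  have h_finrank : Module.finrank (ZMod d) (unimodularSubspace hd hρ) ≤ n := by
    simpa using h_iso.finrank_le_card
  refine ⟨⟨(unimodularSubspace hd hρ).toAddSubgroup, rfl, _, h_finrank,
    natCard_eq_pow_finrank_zmod _⟩, fun u v hu hv => commute_weylOp hd (h_iso u hu v hv), ?_⟩
  rw [meanState_eq_stabilizerState hd hρ]
  exact ⟨isMSPS_stabilizerState hd h_iso _, stabilizerState_posSemidef hd h_iso _,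
    trace_stabilizerState hd _⟩

end PaperQI
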